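/- Let Σ be a signed graph and e an edge of Σ. There is a negative circle of Σ containing e if and only if the block of Σ containing e is unbalanced. -/

import Mathlib

/-- The sign of a walk in a signed graph: the product of the signs of its edges. -/
def walkSign {V : Type*} (G : SimpleGraph V) (σ : Sym2 V → ℤˣ) {u v : V}
    (w : G.Walk u v) : ℤˣ :=
  (w.edges.map σ).prod

/-- A set of vertices induces an inseparable subgraph: the induced subgraph is connected
and remains connected after deleting any one of its vertices (no cutpoint). -/
def inseparableOn {V : Type*} (G : SimpleGraph V) (S : Set V) : Prop :=
  (G.induce S).Connected ∧ ∀ v ∈ S, (G.induce (S \ {v})).Connected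

/-- `S` is (the vertex set of) a block of `G`: a maximal inseparable subgraph. -/
def isBlock {V : Type*} (G : SimpleGraph V) (S : Set V) : Prop :=
  inseparableOn G S ∧ ∀ T : Set V, S ⊆ T → inseparableOn G T → T = S

/-- The signed graph restricted to `S` (e.g. a block) is balanced: every circle lying
within `S` is positive. -/
def balancedOn {V : Type*} (G : SimpleGraph V) (σ : Sym2 V → ℤˣ) (S : Set V) : Prop :=
  ∀ ⦃a : V⦄ (w : G.Walk a a), w.IsCycle → (∀ x ∈ w.support, x ∈ S) →
    walkSign G σ w = 1

lemma walkSign_append' {V : Type*} (G : SimpleGraph V) (σ : Sym2 V → ℤˣ) {a b c : V}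
    (p : G.Walk a b) (q : G.Walk b c) :
    walkSign G σ (p.append q) = walkSign G σ p * walkSign G σ q := by
  simp [walkSign, SimpleGraph.Walk.edges_append]

lemma walkSign_reverse' {V : Type*} (G : SimpleGraph V) (σ : Sym2 V → ℤˣ) {a b : V}
    (p : G.Walk a b) : walkSign G σ p.reverse = walkSign G σ p := by
  simp [walkSign, SimpleGraph.Walk.edges_reverse, List.prod_reverse]

lemma walkSign_rotate' {V : Type*} [DecidableEq V] (G : SimpleGraph V) (σ : Sym2 V → ℤˣ) {a b : V}
    (p : G.Walk a a) (h : b ∈ p.support) : walkSign G σ (p.rotate b h) = walkSign G σ p := by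
  unfold walkSign
  exact ((p.rotate_edges b h).perm.map σ).prod_eq

/-- First hitting path from the start of a walk to a set containing its end. -/
lemma exists_first_hit {V : Type*} {G : SimpleGraph V} (A : Set V) {z c : V} (p : G.Walk z c)
    (hc : c ∈ A) : ∃ w ∈ A, ∃ q : G.Walk z w, q.IsPath ∧ (∀ x ∈ q.support, x ∈ p.support) ∧
      ∀ x ∈ q.support, x ∈ A → x = w := by
  classical
  induction p with
  | nil => exact ⟨_, hc, .nil, by simp, by simp, by simp⟩
  | @cons a b c h p ih =>
    by_cases ha : a ∈ A
    · exact ⟨a, ha, .nil, by simp, by simp, by simp⟩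
    · obtain ⟨w, hw, q, hq, hs, hA⟩ := ih hc
      refine ⟨w, hw, (SimpleGraph.Walk.cons h q).bypass, SimpleGraph.Walk.bypass_isPath _, ?_, ?_⟩
      · intro x hx
        have := SimpleGraph.Walk.support_bypass_subset_support _ hx
        simp only [SimpleGraph.Walk.support_cons, List.mem_cons] at this ⊢
        exact this.imp id (hs x)
      · intro x hx hxA
        have := SimpleGraph.Walk.support_bypass_subset_support _ hx
        simp only [SimpleGraph.Walk.support_cons, List.mem_cons] at this
        rcases this with rfl | h
        · exact absurd hxA ha
        · exact hA x h hxA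

lemma path_edge_sign {V : Type*} {G : SimpleGraph V} (σ : Sym2 V → ℤˣ) {w y : V}
    (R : G.Walk w y) (hR : R.IsPath) (he : s(y, w) ∈ R.edges) :
    walkSign G σ R = σ s(y, w) := by
  cases R with
  | nil => simp at he
  | @cons _ x _ h R =>
    rw [SimpleGraph.Walk.cons_isPath_iff] at hR
    rw [SimpleGraph.Walk.edges_cons, List.mem_cons] at he
    rcases he with he | he
    · have hx : x = y := by
        rw [Sym2.eq_swap] at he
        exact (Sym2.congr_right.1 he).symm
      subst hx
      have := SimpleGraph.Walk.isPath_iff_nil.1 hR.1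
      cases this
      simp [walkSign, Sym2.eq_swap]
    · exact absurd (SimpleGraph.Walk.snd_mem_support_of_mem_edges _ he) hR.2

/-- Closing up an ear to a negative cycle. -/
lemma close_ear {V : Type*} {G : SimpleGraph V} (σ : Sym2 V → ℤˣ) {y z w : V} (h : G.Adj y z)
    (Q : G.Walk z w) (hQ : Q.IsPath) (hyQ : y ∉ Q.support) (R : G.Walk w y) (hR : R.IsPath)
    (hd : ∀ x ∈ Q.support, x ∈ R.support → x = w)
    (hs : walkSign G σ (SimpleGraph.Walk.cons h (Q.append R)) = -1) :
    (SimpleGraph.Walk.cons h (Q.append R)).IsCycle := by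
  rw [SimpleGraph.Walk.cons_isCycle_iff]
  constructor
  · rw [SimpleGraph.Walk.isPath_def, SimpleGraph.Walk.support_append, List.nodup_append]
    refine ⟨hQ.support_nodup, hR.support_nodup.sublist (List.tail_sublist _), ?_⟩
    rintro a ha b hb rfl
    have := hd a ha (List.mem_of_mem_tail hb)
    subst this
    have h1 := hR.support_nodup
    rw [← SimpleGraph.Walk.cons_tail_support, List.nodup_cons] at h1
    exact h1.1 hb
  · intro he
    rw [SimpleGraph.Walk.edges_append, List.mem_append] at he
    rcases he with he | he
    · exact hyQ (SimpleGraph.Walk.fst_mem_support_of_mem_edges _ he)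
    · have hz : z = w := hd z Q.start_mem_support
        (SimpleGraph.Walk.snd_mem_support_of_mem_edges _ he)
      subst hz
      have := SimpleGraph.Walk.isPath_iff_nil.1 hQ
      cases this
      have h2 := path_edge_sign σ R hR he
      simp only [walkSign, SimpleGraph.Walk.nil_append, SimpleGraph.Walk.edges_cons, List.map_cons,
        List.prod_cons] at hs h2
      rw [h2, Int.units_mul_self] at hs
      exact absurd hs (by decide)

lemma exists_walk_of_induce {V : Type*} {G : SimpleGraph V} {S : Set V}
    (h : (G.induce S).Connected) {a b : V} (ha : a ∈ S) (hb : b ∈ S) :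
    ∃ p : G.Walk a b, ∀ x ∈ p.support, x ∈ S := by
  obtain ⟨p⟩ := h.preconnected ⟨a, ha⟩ ⟨b, hb⟩
  refine ⟨p.map (SimpleGraph.Embedding.induce S).toHom, ?_⟩
  intro x hx
  have hx' := (SimpleGraph.Walk.support_map (SimpleGraph.Embedding.induce S).toHom p) ▸ hx
  obtain ⟨t, -, rfl⟩ := List.mem_map.1 hx'
  exact t.2

lemma neg_step {V : Type*} {G : SimpleGraph V} (σ : Sym2 V → ℤˣ) {S : Set V}
    (hS : inseparableOn G S) {y z : V} (hy : y ∈ S) (hz : z ∈ S) (h : G.Adj y z)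
    (C : G.Walk y y) (hC : C.IsCycle) (hCS : ∀ x ∈ C.support, x ∈ S)
    (hs : walkSign G σ C = -1) :
    ∃ D : G.Walk y y, D.IsCycle ∧ (∀ x ∈ D.support, x ∈ S) ∧ s(y, z) ∈ D.edges ∧
      walkSign G σ D = -1 := by
  classical
  obtain ⟨c, hcC, hcy⟩ : ∃ c ∈ C.support, c ≠ y := by
    refine ⟨C.snd, C.getVert_mem_support 1, (C.adj_snd hC.not_nil).ne'⟩
  obtain ⟨p, hp⟩ := exists_walk_of_induce (hS.2 y hy) (a := z) (b := c)
    ⟨hz, h.ne'⟩ ⟨hCS c hcC, hcy⟩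
  obtain ⟨w, ⟨hwC, hwy⟩, Q, hQ, hQp, hQA⟩ :=
    exists_first_hit {x | x ∈ C.support ∧ x ≠ y} p ⟨hcC, hcy⟩
  have hyQ : y ∉ Q.support := fun hh => (hp y (hQp y hh)).2 rfl
  have key : ∀ R : G.Walk w y, R.IsPath → (∀ x ∈ R.support, x ∈ C.support) →
      walkSign G σ (SimpleGraph.Walk.cons h (Q.append R)) = -1 →
      ∃ D : G.Walk y y, D.IsCycle ∧ (∀ x ∈ D.support, x ∈ S) ∧ s(y, z) ∈ D.edges ∧
      walkSign G σ D = -1 := by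
    intro R hR hRC hsg
    refine ⟨_, close_ear σ h Q hQ hyQ R hR ?_ hsg, ?_, by simp, hsg⟩
    · intro x hx hxR
      exact hQA x hx ⟨hRC x hxR, fun e => hyQ (e ▸ hx)⟩
    · intro x hx
      rw [SimpleGraph.Walk.support_cons, List.mem_cons, SimpleGraph.Walk.mem_support_append_iff] at hx
      rcases hx with rfl | hx | hx
      · exact hy
      · exact (hp x (hQp x hx)).1
      · exact hCS x (hRC x hx)
  have hsplit := C.take_spec hwC
  have hP1 : (C.takeUntil w hwC).IsPath := hC.isPath_takeUntil hwC
  have hP2 : (C.dropUntil w hwC).IsPath := by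
    have h1 : C.reverse.IsCycle := hC.reverse
    rw [← hsplit] at hC
    exact hC.isPath_of_append_right (fun hn => hwy hn.eq.symm)
  have hmul : walkSign G σ (C.takeUntil w hwC) * walkSign G σ (C.dropUntil w hwC) = -1 := by
    rw [← walkSign_append', hsplit, hs]
  have hcons : ∀ R : G.Walk w y, walkSign G σ (SimpleGraph.Walk.cons h (Q.append R)) =
      σ s(y, z) * (walkSign G σ Q * walkSign G σ R) := by
    intro R
    rw [← walkSign_append']; simp [walkSign]
  have k1 := key (C.takeUntil w hwC).reverse hP1.reverse (by
    intro x hx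
    rw [SimpleGraph.Walk.support_reverse, List.mem_reverse] at hx
    exact SimpleGraph.Walk.support_takeUntil_subset_support _ _ hx)
  have k2 := key (C.dropUntil w hwC) hP2
    (fun x hx => SimpleGraph.Walk.support_dropUntil_subset_support _ _ hx)
  rw [hcons, walkSign_reverse'] at k1
  rw [hcons] at k2
  generalize walkSign G σ (C.takeUntil w hwC) = s1 at *
  generalize walkSign G σ (C.dropUntil w hwC) = s2 at *
  generalize walkSign G σ Q = s3 at *
  generalize σ s(y, z) = s4 at *
  have dec : ∀ s1 s2 s3 s4 : ℤˣ, s1 * s2 = -1 → s4 * (s3 * s1) = -1 ∨ s4 * (s3 * s2) = -1 := by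
    decide
  exact (dec s1 s2 s3 s4 hmul).elim k1 k2

lemma cycle_diff_connected {V : Type*} {G : SimpleGraph V} {a : V} (C : G.Walk a a)
    (hC : C.IsCycle) (x : V) : (G.induce ({t | t ∈ C.support} \ {x})).Connected := by
  classical
  by_cases hx : x ∈ C.support
  · have hD := hC.rotate hx
    have hsup : ∀ t, t ∈ C.support ↔ t ∈ (C.rotate x hx).support := by
      intro t
      exact (SimpleGraph.Walk.mem_support_rotate_iff ..).symm
    rw [Set.ext hsup (a := {t | t ∈ C.support}) (b := {t | t ∈ (C.rotate x hx).support})]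
    generalize C.rotate x hx = D at hD
    cases D with
    | nil => exact absurd hD (by simp)
    | @cons _ y _ h p =>
      rw [SimpleGraph.Walk.cons_isCycle_iff] at hD
      have hr := hD.1.reverse
      have hsup2 : ∀ t, t ∈ (SimpleGraph.Walk.cons h p).support ↔ t ∈ p.reverse.support := by
        intro t
        simp only [SimpleGraph.Walk.support_cons, List.mem_cons,
          SimpleGraph.Walk.support_reverse, List.mem_reverse]
        constructor
        · rintro (rfl | h)
          · exact p.end_mem_support
          · exact h
        · exact Or.inr
      rw [Set.ext hsup2 (a := {t | t ∈ (SimpleGraph.Walk.cons h p).support})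
        (b := {t | t ∈ p.reverse.support})]
      generalize p.reverse = r at hr
      cases r with
      | nil => exact absurd rfl h.ne
      | cons h' q =>
        rw [SimpleGraph.Walk.cons_isPath_iff] at hr
        have : {t | t ∈ (SimpleGraph.Walk.cons h' q).support} \ {x} = {t | t ∈ q.support} := by
          ext t
          simp only [SimpleGraph.Walk.support_cons, List.mem_cons, Set.mem_diff, Set.mem_setOf_eq,
            Set.mem_singleton_iff]
          constructor
          · rintro ⟨h1 | h1, h2⟩
            · exact absurd h1 h2
            · exact h1
          · intro h1
            exact ⟨Or.inr h1, fun e => hr.2 (e ▸ h1)⟩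
        rw [this]
        exact q.connected_induce_support
  · rw [Set.sdiff_singleton_eq_self (by simpa using hx)]
    exact C.connected_induce_support

/-- An edge of a signed graph lies in a negative circle iff the block containing it is
unbalanced. -/
theorem edge_in_negative_circle_iff_block_unbalanced {V : Type*} [Fintype V]
    (G : SimpleGraph V) (σ : Sym2 V → ℤˣ) {u v : V} (huv : G.Adj u v)
    (S : Set V) (hS : isBlock G S) (hu : u ∈ S) (hv : v ∈ S) :
    (∃ (a : V) (w : G.Walk a a), w.IsCycle ∧ s(u, v) ∈ w.edges ∧
        walkSign G σ w = -1) ↔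
      ¬ balancedOn G σ S := by
  classical
  constructor
  · rintro ⟨a, w, hw, he, hs⟩ hb
    have huw := SimpleGraph.Walk.fst_mem_support_of_mem_edges _ he
    have hvw := SimpleGraph.Walk.snd_mem_support_of_mem_edges _ he
    have hT : inseparableOn G (S ∪ {t | t ∈ w.support}) := by
      constructor
      · exact SimpleGraph.induce_union_connected hS.1.1.preconnected w.connected_induce_support.preconnected ⟨u, hu, huw⟩
      · intro x _
        rw [Set.union_sdiff_distrib]
        refine SimpleGraph.induce_union_connected ?_ (cycle_diff_connected w hw x).preconnected ?_
        · by_cases hx : x ∈ S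
          · exact (hS.1.2 x hx).preconnected
          · rw [Set.sdiff_singleton_eq_self hx]; exact hS.1.1.preconnected
        · by_cases hxu : u = x
          · have : v ≠ x := fun e => huv.ne (hxu.trans e.symm)
            exact ⟨v, ⟨hv, this⟩, hvw, this⟩
          · exact ⟨u, ⟨hu, hxu⟩, huw, hxu⟩
    have hTS := hS.2 _ Set.subset_union_left hT
    have := hb w hw (fun x hx => hTS ▸ Or.inr hx)
    rw [hs] at this
    exact absurd this (by decide)
  · intro hb
    unfold balancedOn at hb
    push Not at hb
    obtain ⟨a, C, hC, hCS, hs⟩ := hb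
    have hs' : walkSign G σ C = -1 := (Int.units_eq_one_or _).resolve_left hs
    obtain ⟨p, hp⟩ := exists_walk_of_induce hS.1.1 (hCS a C.start_mem_support) hu
    have main : ∀ {a b : V} (p : G.Walk a b), (∀ x ∈ p.support, x ∈ S) →
        (∃ C : G.Walk a a, C.IsCycle ∧ (∀ x ∈ C.support, x ∈ S) ∧ walkSign G σ C = -1) →
        ∃ C : G.Walk b b, C.IsCycle ∧ (∀ x ∈ C.support, x ∈ S) ∧ walkSign G σ C = -1 := by
      intro a b p
      induction p with
      | nil => exact fun _ h => h
      | @cons a c b h p ih =>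
        rintro hp ⟨C, hC, hCS, hs⟩
        have hcS : c ∈ S := hp c (by simp)
        obtain ⟨D, hD, hDS, hDe, hDs⟩ := neg_step σ hS.1 (hp a (by simp)) hcS h C hC hCS hs
        have hcD := SimpleGraph.Walk.snd_mem_support_of_mem_edges _ hDe
        refine ih (fun x hx => hp x (by simp [hx])) ⟨D.rotate c hcD, hD.rotate hcD, ?_, ?_⟩
        · intro x hx
          exact hDS x ((SimpleGraph.Walk.mem_support_rotate_iff ..).1 hx)
        · rw [walkSign_rotate', hDs]
    obtain ⟨D, hD, hDS, hDs⟩ := main p hp ⟨C, hC, hCS, hs'⟩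
    obtain ⟨E, hE, _, hEe, hEs⟩ := neg_step σ hS.1 hu hv huv D hD hDS hDs
    exact ⟨u, E, hE, hEe, hEs⟩
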